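/- Let m ≥ 2, let σ₀ = ±1 if m is odd and σ₀ = (−1)^{m/2} if m is even, and fix k ∈ ℝ and T ≥ 0. Let r₀ ∈ ℂ^m be the vector with components (r₀)_j = (ik)^{j−1} for j = 1, …, m. Then there exist τ̄ > 0 and a constant C > 0 such that for all τ ∈ (0, τ̄) and all t ∈ [0, T], ‖exp((t/τ) L_τ) r₀ − e^{−σ₀ (ik)^m t} r₀‖ ≤ Cτ, where exp denotes the matrix exponential. -/

import Mathlib

/-- The m×m matrix with entry `s` in (1-indexed) position (1, m), the matrix `P` in
positions `A_{i+1,j} = P_{ij}` for `1 ≤ i, j ≤ m-1`, and all other entries zero. -/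
noncomputable def embedA (m : ℕ) (s : ℝ) (P : Matrix (Fin (m-1)) (Fin (m-1)) ℝ) :
    Matrix (Fin m) (Fin m) ℝ := fun i j =>
  if hi : (i : ℕ) = 0 then (if (j : ℕ) = m - 1 then s else 0)
  else if hj : (j : ℕ) < m - 1 then
    P ⟨(i : ℕ) - 1, by have := i.isLt; omega⟩ ⟨(j : ℕ), hj⟩
  else 0

/-- The m×m matrix with entries `B_{i+1,j+1} = P_{ij}` (1-indexed) for `1 ≤ i, j ≤ m-1`
and all other entries zero. -/
noncomputable def embedB (m : ℕ) (P : Matrix (Fin (m-1)) (Fin (m-1)) ℝ) :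
    Matrix (Fin m) (Fin m) ℝ := fun i j =>
  if h : (i : ℕ) = 0 ∨ (j : ℕ) = 0 then 0
  else P ⟨(i : ℕ) - 1, by have := i.isLt; omega⟩ ⟨(j : ℕ) - 1, by have := j.isLt; omega⟩

/-- The (m-1)×(m-1) matrix `P*` with (1-indexed) entries `p_{ij} = 0` if `i + j ≠ m`,
and for `i + j = m`: `p_{ij} = σ₀ (-1)^(j-1)` if `j ≤ m/2`, `p_{ij} = σ₀ (-1)^(m-j)`
if `j > m/2`. -/
noncomputable def Pstar (m : ℕ) (σ₀ : ℝ) : Matrix (Fin (m-1)) (Fin (m-1)) ℝ := fun i j =>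
  if (i : ℕ) + (j : ℕ) + 2 = m then
    (if 2 * ((j : ℕ) + 1) ≤ m then σ₀ * (-1) ^ (j : ℕ)
     else σ₀ * (-1) ^ (m - ((j : ℕ) + 1)))
  else 0

/-- The m×m complex matrix `L_τ = -ik Ã_τ + B`, where `Ã_τ` has entry `τσ₀` in
(1-indexed) position (1, m) and `(Ã_τ)_{i+1,j} = P*_{ij}` for `1 ≤ i, j ≤ m-1`,
and `B_{i+1,j+1} = P*_{ij}` with all other entries zero. -/
noncomputable def Lmat (m : ℕ) (σ₀ k τ : ℝ) : Matrix (Fin m) (Fin m) ℂ :=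
  (-(Complex.I * (k : ℂ))) • (embedA m (τ * σ₀) (Pstar m σ₀)).map Complex.ofReal
    + (embedB m (Pstar m σ₀)).map Complex.ofReal

/-- The vector `r₀ ∈ ℂ^m` with components `(r₀)_j = (ik)^(j-1)`, `j = 1, …, m`. -/
noncomputable def r0 (m : ℕ) (k : ℝ) : Fin m → ℂ := fun j => (Complex.I * (k : ℂ)) ^ (j : ℕ)

/-!
The matrix `τ⁻¹ L_τ` couples components only along the reflections `i ↦ m - 1 - i` (the transport
part `-ik Ã_τ`) and `i ↦ m - i` (the relaxation part `B`), with components counted from `0`. In the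
energy with weights `diag(τ⁻¹, 1, …, 1)` the transport part is skew-Hermitian. The relaxation part
is skew as well, except for the fixed point `i = m / 2` that exists when `m` is even: there the
choice of `σ₀` makes the coefficient `-1`. Hence the flow is a contraction in this energy, uniformly
in `τ`.

A contraction flow follows approximate eigenvectors: if `A y - μ y` is small, Duhamel's formula
keeps `exp (t A) y` close to `exp (μ t) y`. For a suitable corrector `s`, the vector `r₀ + τ s` has
a residual of order `τ` for an approximate eigenvalue `-σ₀ (ik)^m - τ κ`. Both `s` and the residual
vanish in the first component, so the large weight `τ⁻¹` there does no harm.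
-/

/-! ### Dissipative flows and approximate eigenvectors -/

section Dissipative

open NormedSpace (exp)

variable {E F : Type*} [NormedAddCommGroup E] [NormedSpace ℂ E] [NormedAddCommGroup F]
  [InnerProductSpace ℂ F]

/-- The operator `A` is dissipative for the positive semidefinite form `⟪W x, W y⟫`, that is, the
energy `‖W x‖ ^ 2` does not increase along the flow of `A`. The weight enters through a map `W` into
an inner product space, so that `E` may carry an unrelated norm. -/
def IsDissipativeIn (W : E →L[ℂ] F) (A : E →L[ℂ] E) : Prop :=
  ∀ x, (inner ℂ (W x) (W (A x))).re ≤ 0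

lemma hasDerivAt_exp_smul_apply [CompleteSpace E] (A : E →L[ℂ] E) (x : E) (t : ℝ) :
    HasDerivAt (fun s : ℝ ↦ exp (s • A) x) (exp (t • A) (A x)) t :=
  ((ContinuousLinearMap.apply ℂ E x).restrictScalars ℝ).hasFDerivAt.comp_hasDerivAt t
    (hasDerivAt_exp_smul_const A t)

lemma exp_smul_apply_comm (A : E →L[ℂ] E) (x : E) (t : ℝ) :
    exp (t • A) (A x) = A (exp (t • A) x) :=
  DFunLike.congr_fun ((Commute.refl A).smul_left t).exp_left.eq x

lemma norm_cexp_sub_cexp_le {a b : ℂ} {M : ℝ} (ha : a.re ≤ M) (hb : b.re ≤ M) :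
    ‖Complex.exp a - Complex.exp b‖ ≤ Real.exp M * ‖a - b‖ := by
  refine (convex_halfSpace_re_le M).norm_image_sub_le_of_norm_deriv_le
    (fun z _ ↦ Complex.differentiableAt_exp) (fun z hz ↦ ?_) hb ha
  rw [Complex.deriv_exp, Complex.norm_exp]
  exact Real.exp_le_exp.2 hz

lemma re_mul_ofReal_le {μ : ℂ} {M t T : ℝ} (hμ : ‖μ‖ ≤ M) (ht : 0 ≤ t) (hT : t ≤ T) :
    (μ * t).re ≤ M * T := by
  rw [Complex.re_mul_ofReal]
  exact mul_le_mul ((Complex.re_le_norm μ).trans hμ) hT ht ((norm_nonneg μ).trans hμ)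

namespace IsDissipativeIn

variable [CompleteSpace E] {W : E →L[ℂ] F} {A : E →L[ℂ] E} {t M : ℝ} {μ ν : ℂ}

lemma norm_map_exp_smul_le (hA : IsDissipativeIn W A) (ht : 0 ≤ t) (x : E) :
    ‖W (exp (t • A) x)‖ ≤ ‖W x‖ := by
  have hderiv (s : ℝ) : HasDerivAt (fun s : ℝ ↦ ‖W (exp (s • A) x)‖ ^ 2)
      (2 * (inner ℂ (W (exp (s • A) x)) (W (A (exp (s • A) x)))).re) s := by
    have hW : HasDerivAt (fun s : ℝ ↦ W (exp (s • A) x)) (W (A (exp (s • A) x))) s :=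
      exp_smul_apply_comm A x s ▸
        (W.restrictScalars ℝ).hasFDerivAt.comp_hasDerivAt s (hasDerivAt_exp_smul_apply A x s)
    let _ : InnerProductSpace ℝ F := InnerProductSpace.complexToReal
    exact hW.norm_sq
  have hanti : Antitone fun s : ℝ ↦ ‖W (exp (s • A) x)‖ ^ 2 := by
    refine antitone_of_deriv_nonpos (fun s ↦ (hderiv s).differentiableAt) fun s ↦ ?_
    rw [(hderiv s).deriv]
    exact mul_nonpos_of_nonneg_of_nonpos zero_le_two (hA _)
  have hsq := hanti ht
  simp only [zero_smul, NormedSpace.exp_zero, one_apply_eq_self] at hsq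
  exact (sq_le_sq₀ (norm_nonneg _) (norm_nonneg _)).1 hsq

lemma norm_map_exp_smul_sub_exp_smul_le (hA : IsDissipativeIn W A) (ht : 0 ≤ t) (hμ : ‖μ‖ ≤ M)
    (x : E) :
    ‖W (exp (t • A) x - Complex.exp (μ * t) • x)‖
      ≤ t * Real.exp (M * t) * ‖W (A x - μ • x)‖ := by
  have hderiv (s : ℝ) : HasDerivAt
      (fun s : ℝ ↦ W (Complex.exp (μ * s) • exp ((t - s) • A) x))
      (-(Complex.exp (μ * s) • W (exp ((t - s) • A) (A x - μ • x)))) s := by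
    have hexp : HasDerivAt (fun s : ℝ ↦ Complex.exp (μ * s)) (Complex.exp (μ * s) * μ) s := by
      simpa using (Complex.ofRealCLM.hasDerivAt.const_mul μ).cexp
    have hflow : HasDerivAt (fun s : ℝ ↦ exp ((t - s) • A) x) (-exp ((t - s) • A) (A x)) s := by
      simpa [Function.comp_def] using
        (hasDerivAt_exp_smul_apply A x (t - s)).scomp s ((hasDerivAt_id s).const_sub t)
    refine ((W.restrictScalars ℝ).hasFDerivAt.comp_hasDerivAt s (hexp.smul hflow)).congr_deriv ?_
    simp only [ContinuousLinearMap.coe_restrictScalars', map_add, map_sub, map_neg, map_smul]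
    module
  have hbound : ∀ s ∈ Set.Ico 0 t,
      ‖-(Complex.exp (μ * s) • W (exp ((t - s) • A) (A x - μ • x)))‖
        ≤ Real.exp (M * t) * ‖W (A x - μ • x)‖ := by
    intro s hs
    rw [norm_neg, norm_smul, Complex.norm_exp]
    gcongr
    · exact re_mul_ofReal_le hμ hs.1 hs.2.le
    · exact hA.norm_map_exp_smul_le (sub_nonneg.2 hs.2.le) _
  have hmvt := norm_image_sub_le_of_norm_deriv_le_segment'
    (fun s _ ↦ (hderiv s).hasDerivWithinAt) hbound t (Set.right_mem_Icc.2 ht)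
  rw [map_sub, norm_sub_rev]
  simpa [mul_assoc, mul_comm, mul_left_comm] using hmvt

lemma norm_exp_smul_sub_exp_smul_le (hA : IsDissipativeIn W A) (hW : ∀ x, ‖x‖ ≤ ‖W x‖)
    (ht : 0 ≤ t) (hμ : ‖μ‖ ≤ M) (hν : ‖ν‖ ≤ M) (x y : E) :
    ‖exp (t • A) x - Complex.exp (ν * t) • x‖
      ≤ (1 + Real.exp (M * t)) * ‖W (y - x)‖
        + t * Real.exp (M * t) * (‖W (A y - μ • y)‖ + ‖μ - ν‖ * ‖x‖) := by
  have hsplit : exp (t • A) x - Complex.exp (ν * t) • x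
      = -exp (t • A) (y - x) + (exp (t • A) y - Complex.exp (μ * t) • y)
        + Complex.exp (μ * t) • (y - x) + (Complex.exp (μ * t) - Complex.exp (ν * t)) • x := by
    rw [map_sub]
    module
  have hμt := re_mul_ofReal_le hμ ht le_rfl
  have hflow : ‖-exp (t • A) (y - x)‖ ≤ ‖W (y - x)‖ := by
    rw [norm_neg]
    exact (hW _).trans (hA.norm_map_exp_smul_le ht _)
  have hquasimode : ‖exp (t • A) y - Complex.exp (μ * t) • y‖
      ≤ t * Real.exp (M * t) * ‖W (A y - μ • y)‖ :=
    (hW _).trans (hA.norm_map_exp_smul_sub_exp_smul_le ht hμ y)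
  have hinitial : ‖Complex.exp (μ * t) • (y - x)‖ ≤ Real.exp (M * t) * ‖W (y - x)‖ := by
    rw [norm_smul, Complex.norm_exp]
    gcongr
    exact hW _
  have hshift : ‖(Complex.exp (μ * t) - Complex.exp (ν * t)) • x‖
      ≤ Real.exp (M * t) * (‖μ - ν‖ * t) * ‖x‖ := by
    rw [norm_smul]
    gcongr
    simpa [← sub_mul, abs_of_nonneg ht] using
      norm_cexp_sub_cexp_le hμt (re_mul_ofReal_le hν ht le_rfl)
  rw [hsplit]
  refine norm_add₄_le.trans ?_
  linarith

end IsDissipativeIn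

end Dissipative

/-! ### Matrices as operators and weighted norms -/

section Matrix

open scoped Matrix

variable {ι : Type*} [Fintype ι]

/-- A square matrix as a continuous operator, bundled as an algebra isomorphism so that it carries
the matrix exponential to the exponential of operators. -/
noncomputable def mulVecCLM [DecidableEq ι] :
    Matrix ι ι ℂ ≃ₐ[ℂ] ((ι → ℂ) →L[ℂ] (ι → ℂ)) :=
  Matrix.toLinAlgEquiv'.trans (Module.End.toContinuousLinearMap (ι → ℂ))

lemma mulVecCLM_apply [DecidableEq ι] (A : Matrix ι ι ℂ) (x : ι → ℂ) :
    mulVecCLM A x = A *ᵥ x :=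
  rfl

open scoped Matrix.Norms.Operator in
lemma exp_mulVec [DecidableEq ι] (A : Matrix ι ι ℂ) (x : ι → ℂ) :
    NormedSpace.exp A *ᵥ x = NormedSpace.exp (mulVecCLM A) x :=
  DFunLike.congr_fun (NormedSpace.map_exp mulVecCLM
    (mulVecCLM (ι := ι)).toLinearMap.continuous_of_finiteDimensional A) x

/-- The map `x ↦ (√dᵢ xᵢ)ᵢ`, through which the inner product `∑ dᵢ ⟪xᵢ, yᵢ⟫` with weight `d` is
pulled back from the Euclidean one. -/
noncomputable def weightedL2 (d : ι → ℝ) : (ι → ℂ) →L[ℂ] EuclideanSpace ℂ ι :=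
  (PiLp.continuousLinearEquiv 2 ℂ fun _ : ι ↦ ℂ).symm.toContinuousLinearMap ∘L
    ContinuousLinearMap.pi fun i ↦ (√(d i) : ℂ) • ContinuousLinearMap.proj i

omit [Fintype ι] in
lemma weightedL2_apply (d : ι → ℝ) (x : ι → ℂ) (i : ι) :
    weightedL2 d x i = √(d i) * x i := by
  simp [weightedL2]

lemma re_inner_weightedL2 {d : ι → ℝ} (hd : ∀ i, 0 ≤ d i) (x y : ι → ℂ) :
    (inner ℂ (weightedL2 d x) (weightedL2 d y)).re = ∑ i, d i * (inner ℂ (x i) (y i)).re := by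
  rw [PiLp.inner_apply, Complex.re_sum]
  refine Finset.sum_congr rfl fun i _ ↦ ?_
  rw [weightedL2_apply, weightedL2_apply, ← smul_eq_mul, ← smul_eq_mul, inner_smul_left,
    inner_smul_right, Complex.conj_ofReal, ← mul_assoc, ← Complex.ofReal_mul,
    Real.mul_self_sqrt (hd i), Complex.re_ofReal_mul]

lemma norm_le_norm_weightedL2 {d : ι → ℝ} (hd : ∀ i, 1 ≤ d i) (x : ι → ℂ) :
    ‖x‖ ≤ ‖weightedL2 d x‖ := by
  refine (pi_norm_le_iff_of_nonneg (norm_nonneg _)).2 fun i ↦ ?_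
  refine le_trans ?_ (PiLp.norm_apply_le (weightedL2 d x) i)
  rw [weightedL2_apply, norm_mul, Complex.norm_real, Real.norm_of_nonneg (Real.sqrt_nonneg _)]
  exact le_mul_of_one_le_left (norm_nonneg _) (Real.one_le_sqrt.2 (hd i))

lemma sum_nonpos_of_add_perm_nonpos {f : ι → ℝ} (e : Equiv.Perm ι)
    (hf : ∀ i, f i + f (e i) ≤ 0) : ∑ i, f i ≤ 0 := by
  have hsum : ∑ i, (f i + f (e i)) = 2 * ∑ i, f i := by
    rw [Finset.sum_add_distrib, Equiv.sum_comp e f, two_mul]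
  linarith [Finset.sum_nonpos fun i (_ : i ∈ Finset.univ) ↦ hf i]

end Matrix

/-! ### The entries of the relaxation matrix -/

/-- The only nonzero entry of row `j` (counted from `0`) of `Ã_τ` at `τ = 1`, which for `j ≠ 0`
is also that of `B`. The exponent is the distance from `j` to the nearer end of `{0, …, m - 1}`,
which agrees with the two cases in the definition of `P*`. -/
noncomputable def relaxCoeff (m : ℕ) (σ₀ : ℝ) (j : ℕ) : ℝ :=
  σ₀ * (-1) ^ min j (m - 1 - j)

section Structure

open scoped Matrix

variable {m : ℕ} {σ₀ : ℝ}

lemma relaxCoeff_rev (i : Fin m) : relaxCoeff m σ₀ i.rev = relaxCoeff m σ₀ i := by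
  rw [relaxCoeff, relaxCoeff, Fin.val_rev, min_comm]
  congr 3 <;> omega

lemma relaxCoeff_mul_self (hσ : σ₀ * σ₀ = 1) (j : ℕ) :
    relaxCoeff m σ₀ j * relaxCoeff m σ₀ j = 1 := by
  rw [relaxCoeff, mul_mul_mul_comm, hσ, ← mul_pow]
  norm_num

lemma relaxCoeff_zero : relaxCoeff m σ₀ 0 = σ₀ := by
  simp [relaxCoeff]

lemma relaxCoeff_sub {j : ℕ} (hj : 0 < j) (hjm : j < m) (hmid : 2 * j ≠ m) :
    relaxCoeff m σ₀ (m - j) = -relaxCoeff m σ₀ j := by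
  rcases lt_or_gt_of_ne hmid with h | h
  · rw [relaxCoeff, relaxCoeff, show min (m - j) (m - 1 - (m - j)) = j - 1 by omega,
      show min j (m - 1 - j) = j - 1 + 1 by omega, pow_succ]
    ring
  · rw [relaxCoeff, relaxCoeff, show min (m - j) (m - 1 - (m - j)) = m - 1 - j + 1 by omega,
      show min j (m - 1 - j) = m - 1 - j by omega, pow_succ]
    ring

lemma relaxCoeff_middle (hσ : Even m → σ₀ = (-1) ^ (m / 2)) {j : ℕ} (hj : 0 < j)
    (hmid : 2 * j = m) : relaxCoeff m σ₀ j = -1 := by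
  rw [relaxCoeff, hσ ⟨j, by omega⟩, ← pow_add, Odd.neg_one_pow]
  exact ⟨j - 1, by omega⟩

lemma Pstar_apply (i j : Fin (m - 1)) :
    Pstar m σ₀ i j = if (j : ℕ) = m - 2 - i then relaxCoeff m σ₀ j else 0 := by
  by_cases h : (j : ℕ) = m - 2 - i
  · rw [Pstar, relaxCoeff, if_pos h, if_pos (by omega)]
    split_ifs <;> congr 2 <;> omega
  · rw [Pstar, if_neg h, if_neg (by omega)]

variable [NeZero m]

lemma val_neg_eq_val_rev_add_one {i : Fin m} (hi : i ≠ 0) :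
    ((-i : Fin m) : ℕ) = i.rev + 1 := by
  rw [Fin.val_neg, if_neg hi, Fin.val_rev]
  omega

lemma embedA_Pstar_apply (τ : ℝ) (i j : Fin m) :
    embedA m (τ * σ₀) (Pstar m σ₀) i j
      = if j = i.rev then (if i = 0 then τ else 1) * relaxCoeff m σ₀ i else 0 := by
  have hrev : j = i.rev ↔ (j : ℕ) = m - 1 - i := by rw [Fin.ext_iff, Fin.val_rev]; omega
  rcases eq_or_ne i 0 with rfl | hi0
  · simp [embedA, hrev, relaxCoeff_zero]
  · have hpos : (i : ℕ) ≠ 0 := Fin.val_ne_zero_iff.2 hi0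
    rw [embedA, dif_neg hpos, if_neg hi0, one_mul, ← relaxCoeff_rev i]
    by_cases h : j = i.rev
    · rw [dif_pos (by omega), Pstar_apply, if_pos h, if_pos (by simp only; omega)]
      simp only [h]
    · rw [if_neg h]
      split_ifs
      · rw [Pstar_apply, if_neg (by simp only; omega)]
      · rfl

lemma embedB_Pstar_apply (i j : Fin m) :
    embedB m (Pstar m σ₀) i j = if i ≠ 0 ∧ j = -i then relaxCoeff m σ₀ i else 0 := by
  rcases eq_or_ne i 0 with rfl | hi0
  · simp [embedB]
  have hneg : j = -i ↔ (j : ℕ) = m - i := by rw [Fin.ext_iff, Fin.val_neg, if_neg hi0]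
  rw [embedB]
  by_cases h : j = -i
  · rw [if_pos (And.intro hi0 h), dif_neg (by omega), Pstar_apply, if_pos (by simp only; omega),
      ← relaxCoeff_rev i, Fin.val_rev]
    congr 1
    simp only
    omega
  · rw [if_neg (fun h' ↦ h h'.2)]
    split_ifs
    · rfl
    · rw [Pstar_apply, if_neg (by simp only; omega)]

lemma Lmat_mulVec_apply (k τ : ℝ) (x : Fin m → ℂ) (i : Fin m) :
    (Lmat m σ₀ k τ *ᵥ x) i = relaxCoeff m σ₀ i *
      ((if i = 0 then 0 else x (-i)) - Complex.I * k * ((if i = 0 then τ else 1) * x i.rev)) := by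
  simp only [Lmat, Matrix.mulVec, dotProduct, Matrix.add_apply, Matrix.smul_apply,
    Matrix.map_apply, embedA_Pstar_apply, embedB_Pstar_apply, add_mul, Finset.sum_add_distrib]
  rcases eq_or_ne i 0 with rfl | hi0
  · simp only [↓reduceIte, Fin.val_zero, apply_ite Complex.ofReal, Complex.ofReal_mul,
      Complex.ofReal_zero, smul_eq_mul, mul_ite, neg_mul, mul_zero, ite_mul, zero_mul,
      Finset.sum_ite_eq', Finset.mem_univ, ne_eq, not_true_eq_false, false_and,
      Finset.sum_const_zero]
    ring
  · simp only [hi0, ↓reduceIte, one_mul, apply_ite Complex.ofReal, Complex.ofReal_zero,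
      smul_eq_mul, mul_ite, neg_mul, mul_zero, ite_mul, zero_mul, Finset.sum_ite_eq',
      Finset.mem_univ, ne_eq, not_false_eq_true, true_and, Complex.ofReal_one]
    ring

/-! ### Dissipativity of the relaxation system -/

/-- The diagonal weight `diag(τ⁻¹, 1, …, 1)` of the energy that the relaxation system dissipates.
It balances the factor `τ` in the first row of `L_τ`. -/
noncomputable def relaxWeight (τ : ℝ) (i : Fin m) : ℝ :=
  if i = 0 then τ⁻¹ else 1

lemma one_le_relaxWeight {τ : ℝ} (hτ : 0 < τ) (hτ1 : τ ≤ 1) (i : Fin m) :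
    1 ≤ relaxWeight τ i := by
  rw [relaxWeight]
  split_ifs
  exacts [(one_le_inv₀ hτ).2 hτ1, le_rfl]

lemma relaxWeight_nonneg {τ : ℝ} (hτ : 0 ≤ τ) (i : Fin m) : 0 ≤ relaxWeight τ i := by
  rw [relaxWeight]
  split_ifs
  exacts [inv_nonneg.2 hτ, zero_le_one]

lemma norm_weightedL2_relaxWeight (τ : ℝ) {x : Fin m → ℂ} (hx : x 0 = 0) :
    ‖weightedL2 (relaxWeight τ) x‖ = ‖WithLp.toLp 2 x‖ := by
  congr 1
  ext i
  rw [weightedL2_apply, relaxWeight]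
  split_ifs with hi
  · simp [hi, hx]
  · simp

/-- The generator `τ⁻¹ L_τ` of the relaxation system in Fourier space, acting on `m`-tuples with the
sup norm. -/
noncomputable def relaxGenerator (m : ℕ) (σ₀ k τ : ℝ) : (Fin m → ℂ) →L[ℂ] (Fin m → ℂ) :=
  τ⁻¹ • mulVecCLM (Lmat m σ₀ k τ)

omit [NeZero m] in
lemma exp_smul_Lmat_mulVec (k τ t : ℝ) (x : Fin m → ℂ) :
    NormedSpace.exp (((t / τ : ℝ) : ℂ) • Lmat m σ₀ k τ) *ᵥ x
      = NormedSpace.exp (t • relaxGenerator m σ₀ k τ) x := by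
  rw [exp_mulVec, map_smul, relaxGenerator, smul_smul, ← div_eq_mul_inv]
  rfl

lemma relaxGenerator_apply_zero (k : ℝ) {τ : ℝ} (hτ : τ ≠ 0) (x : Fin m → ℂ) :
    relaxGenerator m σ₀ k τ x 0 = σ₀ • -(Complex.I * k * x (Fin.rev 0)) := by
  have hτ' : (τ : ℂ) ≠ 0 := Complex.ofReal_ne_zero.2 hτ
  rw [relaxGenerator, smul_apply, mulVecCLM_apply, Pi.smul_apply,
    Lmat_mulVec_apply, if_pos rfl, if_pos rfl, Fin.val_zero, relaxCoeff_zero, Complex.real_smul,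
    Complex.real_smul, Complex.ofReal_inv]
  field_simp
  ring

lemma relaxGenerator_apply_of_ne_zero (k τ : ℝ) (x : Fin m → ℂ) {i : Fin m} (hi : i ≠ 0) :
    relaxGenerator m σ₀ k τ x i
      = (τ⁻¹ * relaxCoeff m σ₀ i) • (x (-i) - Complex.I * k * x i.rev) := by
  rw [relaxGenerator, smul_apply, mulVecCLM_apply, Pi.smul_apply,
    Lmat_mulVec_apply, if_neg hi, if_neg hi, Complex.ofReal_one, one_mul, mul_smul,
    Complex.real_smul (x := relaxCoeff m σ₀ i)]

omit [NeZero m] in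
lemma sum_transport_nonpos (k : ℝ) (x : Fin m → ℂ) :
    ∑ i : Fin m, relaxCoeff m σ₀ i * (inner ℂ (x i) (-(Complex.I * k * x i.rev))).re ≤ 0 := by
  refine sum_nonpos_of_add_perm_nonpos Fin.revPerm fun i ↦ le_of_eq ?_
  simp only [Fin.revPerm_apply, relaxCoeff_rev, Fin.rev_rev, RCLike.inner_apply,
    Complex.mul_re, Complex.mul_im, Complex.neg_re, Complex.neg_im, Complex.conj_re,
    Complex.conj_im, Complex.I_re, Complex.I_im, Complex.ofReal_re, Complex.ofReal_im]
  ring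

lemma sum_relaxation_nonpos (hσ : Even m → σ₀ = (-1) ^ (m / 2)) (x : Fin m → ℂ) :
    ∑ i : Fin m, (if i = 0 then 0 else relaxCoeff m σ₀ i * (inner ℂ (x i) (x (-i))).re) ≤ 0 := by
  refine sum_nonpos_of_add_perm_nonpos (Equiv.neg (Fin m)) fun i ↦ ?_
  rcases eq_or_ne i 0 with rfl | hi
  · simp
  have hpos : 0 < (i : ℕ) := Nat.pos_of_ne_zero (Fin.val_ne_zero_iff.2 hi)
  have hval : ((-i : Fin m) : ℕ) = m - i := by rw [Fin.val_neg, if_neg hi]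
  have hsymm : (inner ℂ (x (-i)) (x i)).re = (inner ℂ (x i) (x (-i))).re :=
    inner_re_symm (𝕜 := ℂ) (x (-i)) (x i)
  rw [Equiv.neg_apply, neg_neg, if_neg hi, if_neg (neg_ne_zero.2 hi), hsymm, hval]
  by_cases hmid : 2 * (i : ℕ) = m
  · have hfix : -i = i := by rw [Fin.ext_iff, hval]; omega
    have hnonneg : 0 ≤ (inner ℂ (x i) (x i)).re := inner_self_nonneg (𝕜 := ℂ) (x := x i)
    rw [show m - (i : ℕ) = i by omega, relaxCoeff_middle hσ hpos hmid, hfix]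
    linarith
  · rw [relaxCoeff_sub hpos i.isLt hmid]
    linarith

lemma isDissipativeIn_relaxGenerator {τ : ℝ} (hτ : 0 < τ) (hσ : Even m → σ₀ = (-1) ^ (m / 2))
    (k : ℝ) : IsDissipativeIn (weightedL2 (relaxWeight τ)) (relaxGenerator m σ₀ k τ) := by
  intro x
  have hsplit (i : Fin m) :
      relaxWeight τ i * (inner ℂ (x i) (relaxGenerator m σ₀ k τ x i)).re
        = τ⁻¹ * ((if i = 0 then 0 else relaxCoeff m σ₀ i * (inner ℂ (x i) (x (-i))).re)
          + relaxCoeff m σ₀ i * (inner ℂ (x i) (-(Complex.I * k * x i.rev))).re) := by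
    rcases eq_or_ne i 0 with rfl | hi
    · rw [relaxGenerator_apply_zero k hτ.ne', relaxWeight, if_pos rfl, if_pos rfl, Fin.val_zero,
        relaxCoeff_zero, inner_smul_right_eq_smul, Complex.smul_re, zero_add, smul_eq_mul]
    · rw [relaxGenerator_apply_of_ne_zero k τ x hi, relaxWeight, if_neg hi, if_neg hi,
        inner_smul_right_eq_smul, Complex.smul_re, inner_sub_right, inner_neg_right,
        Complex.sub_re, Complex.neg_re, smul_eq_mul]
      ring
  rw [re_inner_weightedL2 (relaxWeight_nonneg hτ.le), Finset.sum_congr rfl fun i _ ↦ hsplit i,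
    ← Finset.mul_sum, Finset.sum_add_distrib]
  exact mul_nonpos_of_nonneg_of_nonpos (inv_nonneg.2 hτ.le)
    (add_nonpos (sum_relaxation_nonpos hσ x) (sum_transport_nonpos k x))

/-! ### The approximate eigenpair -/

/-- The growth rate `-σ₀ (ik)^m` of the Fourier mode `k` of `∂ₜu + σ₀ ∂ₓ^m u = 0`. -/
noncomputable def limitRate (m : ℕ) (σ₀ k : ℝ) : ℂ :=
  -σ₀ * (Complex.I * k) ^ m

/-- The components of the first-order corrector `s`. The recursion makes rows `2, …, m` of
`τ⁻¹ L_τ (r₀ + τ s)` equal to those of `-σ₀ (ik)^m r₀`; it is written over all of `ℕ`, and only the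
values at `j < m` have a meaning. -/
noncomputable def correctorSeq (m : ℕ) (σ₀ k : ℝ) : ℕ → ℂ
  | 0 => 0
  | j + 1 => Complex.I * k * correctorSeq m σ₀ k j
      + limitRate m σ₀ k * relaxCoeff m σ₀ j * (Complex.I * k) ^ (m - 1 - j)

/-- The first-order corrector `s` for which `r₀ + τ s` is an approximate eigenvector of
`τ⁻¹ L_τ`. -/
noncomputable def corrector (m : ℕ) (σ₀ k : ℝ) (i : Fin m) : ℂ :=
  correctorSeq m σ₀ k i

/-- The first-order correction `κ` of the rate, read off the first row of
`τ⁻¹ L_τ (r₀ + τ s)`, which equals `-σ₀ (ik)^m - τ κ`. -/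
noncomputable def rateCorrector (m : ℕ) (σ₀ k : ℝ) : ℂ :=
  σ₀ * (Complex.I * k) * correctorSeq m σ₀ k (m - 1)

/-- The approximate eigenvalue `-σ₀ (ik)^m - τ κ` of `τ⁻¹ L_τ`. -/
noncomputable def approxEigenvalue (m : ℕ) (σ₀ k τ : ℝ) : ℂ :=
  limitRate m σ₀ k - τ * rateCorrector m σ₀ k

/-- The approximate eigenvector `r₀ + τ s` of `τ⁻¹ L_τ`. -/
noncomputable def approxEigenvector (m : ℕ) (σ₀ k τ : ℝ) : Fin m → ℂ :=
  r0 m k + τ • corrector m σ₀ k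

/-- A bound, uniform in `τ ∈ [0, 1]`, for the limit rate and the approximate eigenvalue. -/
noncomputable def rateBound (m : ℕ) (σ₀ k : ℝ) : ℝ :=
  ‖limitRate m σ₀ k‖ + ‖rateCorrector m σ₀ k‖

lemma corrector_zero (k : ℝ) : corrector m σ₀ k 0 = 0 := by
  rw [corrector, Fin.val_zero, correctorSeq]

lemma r0_zero (k : ℝ) : r0 m k 0 = 1 := by
  simp [r0]

lemma r0_neg (k : ℝ) {i : Fin m} (hi : i ≠ 0) : r0 m k (-i) = Complex.I * k * r0 m k i.rev := by
  rw [r0, r0, val_neg_eq_val_rev_add_one hi, pow_succ']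

lemma corrector_neg (k : ℝ) {i : Fin m} (hi : i ≠ 0) :
    corrector m σ₀ k (-i)
      = Complex.I * k * corrector m σ₀ k i.rev
        + limitRate m σ₀ k * relaxCoeff m σ₀ i * r0 m k i := by
  have hrev : m - 1 - (i.rev : ℕ) = i := by rw [Fin.val_rev]; omega
  rw [corrector, val_neg_eq_val_rev_add_one hi, correctorSeq, relaxCoeff_rev, hrev, corrector, r0]

lemma relaxGenerator_approxEigenvector_apply (hσ : σ₀ * σ₀ = 1) (k : ℝ) {τ : ℝ} (hτ : τ ≠ 0)
    (i : Fin m) :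
    relaxGenerator m σ₀ k τ (approxEigenvector m σ₀ k τ) i
      = if i = 0 then approxEigenvalue m σ₀ k τ else limitRate m σ₀ k * r0 m k i := by
  rw [approxEigenvector, approxEigenvalue]
  split_ifs with hi
  · have hpow : (Complex.I * k) ^ m = Complex.I * k * r0 m k (Fin.rev 0) := by
      rw [r0, ← pow_succ', Fin.val_rev, Fin.val_zero, zero_add, Nat.sub_add_cancel NeZero.one_le]
    have hlast : corrector m σ₀ k (Fin.rev 0) = correctorSeq m σ₀ k (m - 1) := by
      rw [corrector, Fin.val_rev, Fin.val_zero, zero_add]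
    rw [hi, relaxGenerator_apply_zero k hτ, limitRate, rateCorrector, hpow, Pi.add_apply,
      Pi.smul_apply, hlast, Complex.real_smul, Complex.real_smul]
    ring
  · have hunit : (relaxCoeff m σ₀ i : ℂ) * relaxCoeff m σ₀ i = 1 := by
      exact_mod_cast relaxCoeff_mul_self hσ i
    have hτinv : (τ⁻¹ : ℂ) * τ = 1 := inv_mul_cancel₀ (Complex.ofReal_ne_zero.2 hτ)
    simp only [relaxGenerator_apply_of_ne_zero k τ _ hi, Pi.add_apply, Pi.smul_apply, r0_neg k hi,
      corrector_neg k hi, Complex.real_smul, Complex.ofReal_mul, Complex.ofReal_inv]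
    linear_combination limitRate m σ₀ k * r0 m k i * (τ⁻¹ * τ * hunit + hτinv)

lemma relaxGenerator_approxEigenvector_sub (hσ : σ₀ * σ₀ = 1) (k : ℝ) {τ : ℝ} (hτ : τ ≠ 0) :
    relaxGenerator m σ₀ k τ (approxEigenvector m σ₀ k τ)
        - approxEigenvalue m σ₀ k τ • approxEigenvector m σ₀ k τ
      = τ • (rateCorrector m σ₀ k • (r0 m k - Pi.single 0 1)
          - approxEigenvalue m σ₀ k τ • corrector m σ₀ k) := by
  ext i
  simp only [Pi.sub_apply, relaxGenerator_approxEigenvector_apply hσ k hτ,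
    Pi.smul_apply, smul_eq_mul, Complex.real_smul]
  rcases eq_or_ne i 0 with rfl | hi
  · simp [approxEigenvector, r0_zero, corrector_zero]
  · rw [if_neg hi, Pi.single_eq_of_ne hi, approxEigenvector, approxEigenvalue, Pi.add_apply,
      Pi.smul_apply, Complex.real_smul]
    ring

lemma norm_limitRate_le (m : ℕ) (σ₀ k : ℝ) : ‖limitRate m σ₀ k‖ ≤ rateBound m σ₀ k :=
  le_add_of_nonneg_right (norm_nonneg _)

omit [NeZero m] in
lemma norm_approxEigenvalue_sub_limitRate (k : ℝ) {τ : ℝ} (hτ : 0 ≤ τ) :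
    ‖approxEigenvalue m σ₀ k τ - limitRate m σ₀ k‖ = τ * ‖rateCorrector m σ₀ k‖ := by
  rw [approxEigenvalue, sub_sub_cancel_left, norm_neg, norm_mul, Complex.norm_real,
    Real.norm_of_nonneg hτ]

lemma norm_approxEigenvalue_le (m : ℕ) (σ₀ k : ℝ) {τ : ℝ} (hτ : 0 ≤ τ) (hτ1 : τ ≤ 1) :
    ‖approxEigenvalue m σ₀ k τ‖ ≤ rateBound m σ₀ k := by
  refine (norm_le_norm_add_norm_sub' _ (limitRate m σ₀ k)).trans ?_
  rw [norm_approxEigenvalue_sub_limitRate k hτ, rateBound]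
  gcongr
  exact mul_le_of_le_one_left (norm_nonneg _) hτ1

lemma norm_weightedL2_approxEigenvector_sub_r0 (k : ℝ) {τ : ℝ} (hτ : 0 ≤ τ) :
    ‖weightedL2 (relaxWeight τ) (approxEigenvector m σ₀ k τ - r0 m k)‖
      = τ * ‖WithLp.toLp 2 (corrector m σ₀ k)‖ := by
  rw [approxEigenvector, add_sub_cancel_left, ContinuousLinearMap.map_smul_of_tower, norm_smul,
    Real.norm_of_nonneg hτ, norm_weightedL2_relaxWeight τ (corrector_zero k)]

/-- A bound, per unit of `τ`, for the energy norm of the residual of the approximate eigenpair. -/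
noncomputable def residualConst (m : ℕ) [NeZero m] (σ₀ k : ℝ) : ℝ :=
  ‖rateCorrector m σ₀ k‖ * ‖WithLp.toLp 2 (r0 m k - Pi.single 0 1)‖
    + rateBound m σ₀ k * ‖WithLp.toLp 2 (corrector m σ₀ k)‖

lemma norm_weightedL2_residual_le (hσ : σ₀ * σ₀ = 1) (k : ℝ) {τ : ℝ} (hτ : 0 < τ) (hτ1 : τ ≤ 1) :
    ‖weightedL2 (relaxWeight τ) (relaxGenerator m σ₀ k τ (approxEigenvector m σ₀ k τ)
        - approxEigenvalue m σ₀ k τ • approxEigenvector m σ₀ k τ)‖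
      ≤ τ * residualConst m σ₀ k := by
  have hzero : (rateCorrector m σ₀ k • (r0 m k - Pi.single 0 1)
      - approxEigenvalue m σ₀ k τ • corrector m σ₀ k : Fin m → ℂ) 0 = 0 := by
    simp [r0_zero, corrector_zero]
  rw [relaxGenerator_approxEigenvector_sub hσ k hτ.ne', ContinuousLinearMap.map_smul_of_tower,
    norm_smul, Real.norm_of_nonneg hτ.le, norm_weightedL2_relaxWeight τ hzero, residualConst,
    WithLp.toLp_sub, WithLp.toLp_smul, WithLp.toLp_smul]
  gcongr
  refine (norm_sub_le _ _).trans ?_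
  rw [norm_smul, norm_smul]
  gcongr
  exact norm_approxEigenvalue_le m σ₀ k hτ.le hτ1

/-- The constant of the first-order estimate: for every `τ ∈ (0, 1]`, the error at time `t` is at
most this constant times `τ`. -/
noncomputable def relaxErrorConst (m : ℕ) [NeZero m] (σ₀ k t : ℝ) : ℝ :=
  (1 + Real.exp (rateBound m σ₀ k * t)) * ‖WithLp.toLp 2 (corrector m σ₀ k)‖
    + t * Real.exp (rateBound m σ₀ k * t)
      * (residualConst m σ₀ k + ‖rateCorrector m σ₀ k‖ * ‖r0 m k‖)

lemma rateBound_nonneg (m : ℕ) (σ₀ k : ℝ) : 0 ≤ rateBound m σ₀ k :=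
  add_nonneg (norm_nonneg _) (norm_nonneg _)

lemma residualConst_nonneg (m : ℕ) [NeZero m] (σ₀ k : ℝ) : 0 ≤ residualConst m σ₀ k := by
  have hM := rateBound_nonneg m σ₀ k
  rw [residualConst]
  positivity

lemma relaxErrorConst_nonneg (m : ℕ) [NeZero m] (σ₀ k : ℝ) {t : ℝ} (ht : 0 ≤ t) :
    0 ≤ relaxErrorConst m σ₀ k t := by
  have hres := residualConst_nonneg m σ₀ k
  rw [relaxErrorConst]
  positivity

lemma relaxErrorConst_mono (m : ℕ) [NeZero m] (σ₀ k : ℝ) {t T : ℝ} (ht : 0 ≤ t) (hT : t ≤ T) :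
    relaxErrorConst m σ₀ k t ≤ relaxErrorConst m σ₀ k T := by
  have hM := rateBound_nonneg m σ₀ k
  have hres := residualConst_nonneg m σ₀ k
  have hT' := ht.trans hT
  rw [relaxErrorConst, relaxErrorConst]
  gcongr

theorem norm_exp_smul_relaxGenerator_sub_le (hσ : σ₀ * σ₀ = 1)
    (hσm : Even m → σ₀ = (-1) ^ (m / 2)) (k : ℝ) {τ t : ℝ} (hτ : 0 < τ) (hτ1 : τ ≤ 1)
    (ht : 0 ≤ t) :
    ‖NormedSpace.exp (t • relaxGenerator m σ₀ k τ) (r0 m k)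
        - Complex.exp (limitRate m σ₀ k * t) • r0 m k‖ ≤ relaxErrorConst m σ₀ k t * τ := by
  have hcompare := (isDissipativeIn_relaxGenerator hτ hσm k).norm_exp_smul_sub_exp_smul_le
    (norm_le_norm_weightedL2 (one_le_relaxWeight hτ hτ1)) ht
    (norm_approxEigenvalue_le m σ₀ k hτ.le hτ1) (norm_limitRate_le m σ₀ k) (r0 m k)
    (approxEigenvector m σ₀ k τ)
  rw [norm_weightedL2_approxEigenvector_sub_r0 k hτ.le,
    norm_approxEigenvalue_sub_limitRate k hτ.le] at hcompare
  calc _ ≤ _ := hcompare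
    _ ≤ (1 + Real.exp (rateBound m σ₀ k * t)) * (τ * ‖WithLp.toLp 2 (corrector m σ₀ k)‖)
        + t * Real.exp (rateBound m σ₀ k * t)
          * (τ * residualConst m σ₀ k + τ * ‖rateCorrector m σ₀ k‖ * ‖r0 m k‖) := by
      gcongr
      exact norm_weightedL2_residual_le hσ k hτ hτ1
    _ = relaxErrorConst m σ₀ k t * τ := by
      rw [relaxErrorConst]
      ring

end Structure

/-- First-order (in τ) convergence, in Fourier space, of the solution
of the hyperbolic relaxation to the solution of `∂ₜu + σ₀ ∂ₓ^m u = 0`: there are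
`τ̄, C > 0` with `‖exp((t/τ) L_τ) r₀ - e^{-σ₀ (ik)^m t} r₀‖ ≤ Cτ` for `τ ∈ (0, τ̄)`,
`t ∈ [0, T]`. -/
theorem stmt13 (m : ℕ) (hm : 2 ≤ m) (σ₀ : ℝ)
    (hσ : (Odd m ∧ (σ₀ = 1 ∨ σ₀ = -1)) ∨ (Even m ∧ σ₀ = (-1) ^ (m / 2)))
    (k : ℝ) (T : ℝ) (hT : 0 ≤ T) :
    ∃ τbar C : ℝ, 0 < τbar ∧ 0 < C ∧
      ∀ τ ∈ Set.Ioo (0 : ℝ) τbar, ∀ t ∈ Set.Icc (0 : ℝ) T,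
        ‖(NormedSpace.exp (((t / τ : ℝ) : ℂ) • Lmat m σ₀ k τ)).mulVec (r0 m k)
            - Complex.exp (-(σ₀ : ℂ) * (Complex.I * (k : ℂ)) ^ m * (t : ℂ)) • r0 m k‖
          ≤ C * τ := by
  have : NeZero m := ⟨by omega⟩
  have hsq : σ₀ * σ₀ = 1 := by
    rcases hσ with ⟨-, rfl | rfl⟩ | ⟨-, rfl⟩
    · norm_num
    · norm_num
    · rw [← mul_pow]; norm_num
  have heven (h : Even m) : σ₀ = (-1) ^ (m / 2) :=
    hσ.elim (fun h' ↦ absurd h (Nat.not_even_iff_odd.2 h'.1)) And.right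
  refine ⟨1, relaxErrorConst m σ₀ k T + 1, one_pos,
    add_pos_of_nonneg_of_pos (relaxErrorConst_nonneg m σ₀ k hT) one_pos, ?_⟩
  rintro τ ⟨hτ, hτ1⟩ t ⟨ht, htT⟩
  rw [exp_smul_Lmat_mulVec]
  calc _ ≤ relaxErrorConst m σ₀ k t * τ :=
        norm_exp_smul_relaxGenerator_sub_le hsq heven k hτ hτ1.le ht
    _ ≤ (relaxErrorConst m σ₀ k T + 1) * τ := by
        gcongr
        exact (relaxErrorConst_mono m σ₀ k ht htT).trans (le_add_of_nonneg_right zero_le_one)
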